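/- Consider the random process in which at each step a vertex is chosen uniformly at random from the n vertices, independently of previous choices, and a raising operation is performed there, and define Ψ(t) = ∑_v (r*_v − r_v(t)), the total amount of raising remaining after t steps (by uniqueness of the limiting raising vector, the limiting raising vector of α(t) equals r* − r(t)). Then E[Ψ(t)] ≤ (1 − 1/(2n^3))^t · Ψ(0) for every t ≥ 0. -/

import Mathlib

open Filter Topology

variable {V : Type*}

/-- Maximum weight of an edge leaving `v` (as a supremum over the finite edge set). -/
noncomputable def outMax (E : V → V → Prop) (α : V → V → ℝ) (v : V) : ℝ :=
  sSup {x : ℝ | ∃ w, E v w ∧ x = α v w}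

/-- Maximum weight of an edge entering `v`. -/
noncomputable def inMax (E : V → V → Prop) (α : V → V → ℝ) (v : V) : ℝ :=
  sSup {x : ℝ | ∃ u, E u v ∧ x = α u v}

/-- A graph function is balanced if the max outgoing weight equals the max incoming
weight at every vertex. -/
def IsBalancedGF (E : V → V → Prop) (α : V → V → ℝ) : Prop :=
  ∀ v, outMax E α v = inMax E α v

/-- Raising imbalance at `v`. -/
noncomputable def rhoR (E : V → V → Prop) (α : V → V → ℝ) (v : V) : ℝ :=
  max 0 (outMax E α v - inMax E α v)

/-- Lowering imbalance at `v`. -/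
noncomputable def rhoL (E : V → V → Prop) (α : V → V → ℝ) (v : V) : ℝ :=
  max 0 (inMax E α v - outMax E α v)

/-- A balancing operation at `v`: add `(α_v^out − α_v^in)/2` to every edge entering `v`
and subtract the same quantity from every edge leaving `v` (a self-loop is unchanged). -/
noncomputable def balanceAt [DecidableEq V] (E : V → V → Prop) (α : V → V → ℝ) (v : V) :
    V → V → ℝ :=
  fun a b =>
    α a b + (if b = v then (outMax E α v - inMax E α v) / 2 else 0)
          - (if a = v then (outMax E α v - inMax E α v) / 2 else 0)

/-- A raising operation at `v`: balance at `v` if the raising imbalance is positive,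
otherwise do nothing. -/
noncomputable def raiseOp [DecidableEq V] (E : V → V → Prop) (α : V → V → ℝ) (v : V) :
    V → V → ℝ :=
  if 0 < rhoR E α v then balanceAt E α v else α

/-- A lowering operation at `v`: balance at `v` if the lowering imbalance is positive,
otherwise do nothing. -/
noncomputable def lowerOp [DecidableEq V] (E : V → V → Prop) (α : V → V → ℝ) (v : V) :
    V → V → ℝ :=
  if 0 < rhoL E α v then balanceAt E α v else α

/-- A sequence of vertices is fair if every vertex appears infinitely often. -/
def Fair (σ : ℕ → V) : Prop := ∀ (v : V) (N : ℕ), ∃ t, N ≤ t ∧ σ t = v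

/-- State after `t` raising operations along the sequence `σ`. -/
noncomputable def raiseIter [DecidableEq V] (E : V → V → Prop) (α : V → V → ℝ)
    (σ : ℕ → V) : ℕ → V → V → ℝ
  | 0 => α
  | t + 1 => raiseOp E (raiseIter E α σ t) (σ t)

/-- State after `t` lowering operations along the sequence `σ`. -/
noncomputable def lowerIter [DecidableEq V] (E : V → V → Prop) (α : V → V → ℝ)
    (σ : ℕ → V) : ℕ → V → V → ℝ
  | 0 => α
  | t + 1 => lowerOp E (lowerIter E α σ t) (σ t)

/-- The raising vector: cumulative amount by which each vertex has been raised after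
`t` raising operations along `σ`. -/
noncomputable def rvec [DecidableEq V] (E : V → V → Prop) (α : V → V → ℝ)
    (σ : ℕ → V) : ℕ → V → ℝ
  | 0 => fun _ => 0
  | t + 1 => fun u =>
      rvec E α σ t u + (if u = σ t then rhoR E (raiseIter E α σ t) (σ t) / 2 else 0)

/-- State after performing raising operations along a finite list of vertices. -/
noncomputable def raiseList [DecidableEq V] (E : V → V → Prop) :
    (V → V → ℝ) → List V → V → V → ℝ
  | α, [] => α
  | α, v :: l => raiseList E (raiseOp E α v) l

/-- Raising vector accumulated along a finite list of raising operations. -/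
noncomputable def rvecList [DecidableEq V] (E : V → V → Prop) :
    (V → V → ℝ) → List V → V → ℝ
  | _, [] => fun _ => 0
  | α, v :: l => fun u =>
      (if u = v then rhoR E α v / 2 else 0) + rvecList E (raiseOp E α v) l u

/-- State after performing (unconditional) balancing operations along a list. -/
noncomputable def balList [DecidableEq V] (E : V → V → Prop) :
    (V → V → ℝ) → List V → V → V → ℝ
  | α, [] => α
  | α, v :: l => balList E (balanceAt E α v) l

/-- State after `t` balancing operations along the sequence `σ`. -/
noncomputable def balIter [DecidableEq V] (E : V → V → Prop) (α : V → V → ℝ)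
    (σ : ℕ → V) : ℕ → V → V → ℝ
  | 0 => α
  | t + 1 => balanceAt E (balIter E α σ t) (σ t)

/-- Two graph functions are equivalent if their sums around every directed cycle agree. -/
def Equivalent (E : V → V → Prop) (α γ : V → V → ℝ) : Prop :=
  ∀ (k : ℕ) (f : ZMod (k + 1) → V), (∀ i, E (f i) (f (i + 1))) →
    (∑ i, α (f i) (f (i + 1))) = ∑ i, γ (f i) (f (i + 1))

/-- The raising-balanced graph function determined by the limiting raising vector. -/
noncomputable def alphaR (α : V → V → ℝ) (rstar : V → ℝ) : V → V → ℝ :=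
  fun u v => α u v + rstar v - rstar u

/-- Height of a vertex: `y_v = -r*_v`. -/
noncomputable def height (rstar : V → ℝ) (v : V) : ℝ := -rstar v

/-- Level of a vertex: maximum over incoming edges of `α^R`. -/
noncomputable def level (E : V → V → Prop) (α : V → V → ℝ) (rstar : V → ℝ) (v : V) : ℝ :=
  inMax E (alphaR α rstar) v

/-- Momentum of a vertex: `m_v = max over edges (u,v) entering v of (α_{uv} − x_v)`. -/
noncomputable def momentum (E : V → V → Prop) (α : V → V → ℝ) (rstar : V → ℝ) (v : V) : ℝ :=
  sSup {c : ℝ | ∃ u, E u v ∧ c = α u v - level E α rstar v}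

/-!
The limiting raising vector `r` is the least nonnegative vector whose raising makes `α`
raising-balanced, so after raising at one vertex the limiting vector is what remains of `r`.
The heart of the matter is the bound `r v ≤ n ρ`, where `ρ` is the total raising imbalance:
the values of `r` start at most `ρ` above `0` and have no gap longer than `ρ`. Indeed, suppose all
vertices with `r > c` had `r > c + ρ`, and let `x` be the highest level among them. Following
maximal incoming edges upwards in `r` shows that `α_v^out ≤ x + ρ` at such a vertex, so an edge of
`α^R` of weight `x` leaving a vertex of level `x` drops by at most `ρ` in `r` and hence stays
above `c`, where it must end at level `x` again. A minimal nonempty set of vertices of level `x`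
above `c` that is closed under these edges could therefore be raised slightly less, against the
minimality of `r`.

Summing over `v` gives `∑ r ≤ n² ρ`. A uniformly random raising operation removes `ρ / (2n)` from
`∑ r` on average, which is at least the fraction `1 / (2n³)`.
-/

section MaximalWeights

variable {E : V → V → Prop}

theorem le_inMax [Finite V] (β : V → V → ℝ) {u v : V} (huv : E u v) : β u v ≤ inMax E β v := by
  refine le_csSup ((Set.finite_range fun u => β u v).subset ?_).bddAbove ⟨u, huv, rfl⟩
  rintro _ ⟨u, -, rfl⟩
  exact ⟨u, rfl⟩

theorem exists_inMax_eq [Finite V] (β : V → V → ℝ) {v : V} (hin : ∃ u, E u v) :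
    ∃ u, E u v ∧ inMax E β v = β u v := by
  obtain ⟨u, huv⟩ := hin
  refine Set.Nonempty.csSup_mem (s := {x | ∃ u, E u v ∧ x = β u v}) ⟨_, u, huv, rfl⟩
    ((Set.finite_range fun u => β u v).subset ?_)
  rintro _ ⟨u, -, rfl⟩
  exact ⟨u, rfl⟩

theorem continuous_inMax [Finite V] (E : V → V → Prop) (v : V) :
    Continuous fun β : V → V → ℝ => inMax E β v := by
  have := Fintype.ofFinite {u // E u v}
  have inMax_eq_iSup (β : V → V → ℝ) : inMax E β v = ⨆ u : {u // E u v}, β u v := by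
    refine congrArg sSup (Set.ext fun x => ?_)
    simp only [Set.mem_ofPred_eq, Set.mem_range, Subtype.exists, exists_prop, eq_comm]
  simp only [inMax_eq_iSup]
  cases isEmpty_or_nonempty {u // E u v}
  · simpa only [Real.iSup_of_isEmpty] using continuous_const
  · simp only [← Finset.sup'_univ_eq_ciSup]
    exact Continuous.finset_sup'_apply _ fun u _ => by fun_prop

-- Reversing all edges exchanges `outMax` and `inMax` definitionally.
theorem le_outMax [Finite V] (β : V → V → ℝ) {v w : V} (hvw : E v w) : β v w ≤ outMax E β v :=
  le_inMax (E := flip E) (flip β) hvw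

theorem exists_outMax_eq [Finite V] (β : V → V → ℝ) {v : V} (hout : ∃ w, E v w) :
    ∃ w, E v w ∧ outMax E β v = β v w :=
  exists_inMax_eq (E := flip E) (flip β) hout

theorem continuous_outMax [Finite V] (E : V → V → Prop) (v : V) :
    Continuous fun β : V → V → ℝ => outMax E β v :=
  (continuous_inMax (flip E) v).comp (f := flip) (by unfold flip; fun_prop)

end MaximalWeights

section RaisingImbalance

variable {E : V → V → Prop} {α β : V → V → ℝ}

theorem rhoR_nonneg (E : V → V → Prop) (β : V → V → ℝ) (v : V) : 0 ≤ rhoR E β v :=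
  le_max_left _ _

theorem outMax_le_inMax_add_rhoR (E : V → V → Prop) (β : V → V → ℝ) (v : V) :
    outMax E β v ≤ inMax E β v + rhoR E β v :=
  sub_le_iff_le_add'.1 (le_max_right _ _)

theorem continuous_rhoR [Finite V] (E : V → V → Prop) (v : V) :
    Continuous fun β : V → V → ℝ => rhoR E β v :=
  continuous_const.max ((continuous_outMax E v).sub (continuous_inMax E v))

theorem rhoR_le_rhoR_alphaR_add [Finite V] {v : V} (hout : ∃ w, E v w) (hin : ∃ u, E u v)
    {s : V → ℝ} (hs : 0 ≤ s) : rhoR E α v ≤ rhoR E (alphaR α s) v + 2 * s v := by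
  obtain ⟨w, hvw, hw⟩ := exists_outMax_eq α hout
  obtain ⟨u, huv, hu⟩ := exists_inMax_eq (alphaR α s) hin
  have hnonneg := rhoR_nonneg E (alphaR α s) v
  have hedge := (le_outMax (alphaR α s) hvw).trans (outMax_le_inMax_add_rhoR E (alphaR α s) v)
  rw [hu] at hedge
  have hmax := le_inMax α huv
  have hsu := hs u
  have hsv := hs v
  have hsw := hs w
  simp only [alphaR, Pi.zero_apply] at hedge hsu hsv hsw
  exact max_le (by linarith) (by linarith)

/-- A graph function is raising-balanced if its raising imbalance vanishes at every vertex. -/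
def IsRaisingBalanced (E : V → V → Prop) (β : V → V → ℝ) : Prop :=
  ∀ v, rhoR E β v = 0

theorem isRaisingBalanced_iff_forall_edge_le [Finite V] (hout : ∀ v, ∃ w, E v w) :
    IsRaisingBalanced E β ↔ ∀ v w, E v w → β v w ≤ inMax E β v := by
  simp only [IsRaisingBalanced, rhoR, max_eq_left_iff, sub_nonpos]
  refine forall_congr' fun v => ⟨fun hv w hvw => (le_outMax β hvw).trans hv, fun hv => ?_⟩
  obtain ⟨w, hvw, hw⟩ := exists_outMax_eq β (hout v)
  exact hw ▸ hv w hvw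

end RaisingImbalance

section RaisingVectors

variable {E : V → V → Prop} {α : V → V → ℝ} {r s : V → ℝ}

theorem alphaR_alphaR (α : V → V → ℝ) (r s : V → ℝ) :
    alphaR (alphaR α r) s = alphaR α (r + s) := by
  funext u v
  simp only [alphaR, Pi.add_apply]
  ring

theorem single_half_rhoR_nonneg [DecidableEq V] (E : V → V → Prop) (α : V → V → ℝ) (v : V) :
    0 ≤ Pi.single (M := fun _ => ℝ) v (rhoR E α v / 2) :=
  Pi.single_nonneg.2 (div_nonneg (rhoR_nonneg E α v) zero_le_two)

theorem raiseOp_eq_alphaR [DecidableEq V] (E : V → V → Prop) (α : V → V → ℝ) (v : V) :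
    raiseOp E α v = alphaR α (Pi.single v (rhoR E α v / 2)) := by
  funext a b
  by_cases hv : 0 < rhoR E α v
  · have hρ : rhoR E α v = outMax E α v - inMax E α v :=
      max_eq_right ((lt_max_iff.1 hv).resolve_left (lt_irrefl 0)).le
    rw [raiseOp, if_pos hv, hρ]
    simp only [balanceAt, alphaR, Pi.single_apply]
  · have hρ : rhoR E α v = 0 := (not_lt.1 hv).antisymm (rhoR_nonneg E α v)
    rw [raiseOp, if_neg hv, hρ]
    simp only [zero_div, Pi.single_zero, alphaR, Pi.zero_apply, add_zero, sub_zero]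

theorem rvec_succ [DecidableEq V] (E : V → V → Prop) (α : V → V → ℝ) (σ : ℕ → V) (t : ℕ) :
    rvec E α σ (t + 1) =
      rvec E α σ t + Pi.single (σ t) (rhoR E (raiseIter E α σ t) (σ t) / 2) := by
  funext u
  simp only [rvec, Pi.add_apply, Pi.single_apply]

theorem raiseIter_eq_alphaR [DecidableEq V] (E : V → V → Prop) (α : V → V → ℝ) (σ : ℕ → V)
    (t : ℕ) : raiseIter E α σ t = alphaR α (rvec E α σ t) := by
  induction t with
  | zero => funext u v; simp only [raiseIter, alphaR, rvec, add_zero, sub_zero]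
  | succ t ih => rw [rvec_succ, ← alphaR_alphaR, ← ih, raiseIter, raiseOp_eq_alphaR]

theorem rvec_nonneg [DecidableEq V] (E : V → V → Prop) (α : V → V → ℝ) (σ : ℕ → V) (t : ℕ) :
    0 ≤ rvec E α σ t := by
  induction t with
  | zero => exact le_rfl
  | succ t ih =>
    rw [rvec_succ]
    exact add_nonneg ih (single_half_rhoR_nonneg _ _ _)

/-- The nonnegative raising vectors that turn `α` into a raising-balanced graph function. The
limiting raising vector is the least of them. -/
def raisingBalancers (E : V → V → Prop) (α : V → V → ℝ) : Set (V → ℝ) :=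
  {s | 0 ≤ s ∧ IsRaisingBalanced E (alphaR α s)}

theorem sub_mem_raisingBalancers_alphaR (hs : s ∈ raisingBalancers E α) (hrs : r ≤ s) :
    s - r ∈ raisingBalancers E (alphaR α r) :=
  ⟨sub_nonneg.2 hrs, by rw [alphaR_alphaR, add_sub_cancel]; exact hs.2⟩

theorem isLeast_raisingBalancers_alphaR {d : V → ℝ} (hr : IsLeast (raisingBalancers E α) r)
    (hd : 0 ≤ d) (hdr : d ≤ r) : IsLeast (raisingBalancers E (alphaR α d)) (r - d) :=
  ⟨sub_mem_raisingBalancers_alphaR hr.1 hdr, fun s hs =>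
    sub_le_iff_le_add'.2 (hr.2 ⟨add_nonneg hd hs.1, alphaR_alphaR α d s ▸ hs.2⟩)⟩

theorem single_half_rhoR_le [Finite V] [DecidableEq V] {v : V} (hout : ∃ w, E v w)
    (hin : ∃ u, E u v) (hs : s ∈ raisingBalancers E α) : Pi.single v (rhoR E α v / 2) ≤ s := by
  intro u
  rcases eq_or_ne u v with rfl | huv
  · have hρ := rhoR_le_rhoR_alphaR_add (α := α) hout hin hs.1
    rw [hs.2 u] at hρ
    rw [Pi.single_eq_same]
    linarith
  · rw [Pi.single_eq_of_ne huv]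
    exact hs.1 u

theorem isLeast_raisingBalancers_raiseOp [Finite V] [DecidableEq V] {v : V} (hout : ∃ w, E v w)
    (hin : ∃ u, E u v) (hr : IsLeast (raisingBalancers E α) r) :
    IsLeast (raisingBalancers E (raiseOp E α v)) (r - Pi.single v (rhoR E α v / 2)) := by
  rw [raiseOp_eq_alphaR]
  exact isLeast_raisingBalancers_alphaR hr (single_half_rhoR_nonneg E α v)
    (single_half_rhoR_le hout hin hr.1)

theorem rvec_le_of_mem_raisingBalancers [Finite V] [DecidableEq V] (hout : ∀ v, ∃ w, E v w)
    (hin : ∀ v, ∃ u, E u v) (hs : s ∈ raisingBalancers E α) (σ : ℕ → V) (t : ℕ) :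
    rvec E α σ t ≤ s := by
  induction t with
  | zero => exact hs.1
  | succ t ih =>
    have hrest : s - rvec E α σ t ∈ raisingBalancers E (raiseIter E α σ t) :=
      raiseIter_eq_alphaR E α σ t ▸ sub_mem_raisingBalancers_alphaR hs ih
    rw [rvec_succ]
    exact le_sub_iff_add_le'.1 (single_half_rhoR_le (hout (σ t)) (hin (σ t)) hrest)

end RaisingVectors

section Limit

variable {E : V → V → Prop} {α : V → V → ℝ} {r : V → ℝ} {σ : ℕ → V}

theorem exists_fair (V : Type*) [Countable V] [Nonempty V] : ∃ σ : ℕ → V, Fair σ := by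
  obtain ⟨f, hf⟩ := exists_surjective_nat V
  refine ⟨fun t => f t.unpair.1, fun v N => ?_⟩
  obtain ⟨a, rfl⟩ := hf v
  exact ⟨Nat.pair a N, Nat.right_le_pair a N, by simp only [Nat.unpair_pair]⟩

theorem isRaisingBalanced_of_tendsto_rvec [Finite V] [DecidableEq V] (hσ : Fair σ)
    (hr : Tendsto (rvec E α σ) atTop (𝓝 r)) : IsRaisingBalanced E (alphaR α r) := by
  intro v
  have hstate : Tendsto (raiseIter E α σ) atTop (𝓝 (alphaR α r)) := by
    have hcont : Continuous (alphaR α) := by unfold alphaR; fun_prop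
    simpa only [Function.comp_def, ← raiseIter_eq_alphaR] using (hcont.tendsto r).comp hr
  have hincr : Tendsto (fun t => rvec E α σ (t + 1) v - rvec E α σ t v) atTop (𝓝 0) := by
    have hv := tendsto_pi_nhds.1 hr v
    simpa only [sub_self] using ((tendsto_add_atTop_iff_nat 1).2 hv).sub hv
  have hlim : Tendsto
      (fun t => rhoR E (raiseIter E α σ t) v - 2 * (rvec E α σ (t + 1) v - rvec E α σ t v))
      atTop (𝓝 (rhoR E (alphaR α r) v)) := by
    simpa only [Function.comp_def, mul_zero, sub_zero] using
      (((continuous_rhoR E v).tendsto _).comp hstate).sub (hincr.const_mul 2)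
  -- The sequence in `hlim` vanishes whenever `v` is raised, hence infinitely often.
  refine isClosed_singleton.mem_of_frequently_of_tendsto (frequently_atTop.2 fun N => ?_) hlim
  obtain ⟨t, hNt, rfl⟩ := hσ v N
  refine ⟨t, hNt, ?_⟩
  simp only [rvec_succ, Pi.add_apply, Pi.single_eq_same, Set.mem_singleton_iff]
  ring

theorem isLeast_raisingBalancers_of_tendsto_rvec [Finite V] [DecidableEq V]
    (hout : ∀ v, ∃ w, E v w) (hin : ∀ v, ∃ u, E u v) (hσ : Fair σ)
    (hr : Tendsto (rvec E α σ) atTop (𝓝 r)) : IsLeast (raisingBalancers E α) r :=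
  ⟨⟨ge_of_tendsto' hr (rvec_nonneg E α σ), isRaisingBalanced_of_tendsto_rvec hσ hr⟩,
    fun _ hs => le_of_tendsto' hr (rvec_le_of_mem_raisingBalancers hout hin hs σ)⟩

end Limit

section TightEdges

variable {E : V → V → Prop} {α β : V → V → ℝ} {r : V → ℝ}

/-- An edge is tight if its weight equals the maximum weight of an edge entering its tail; in a
raising-balanced graph function this is the largest weight that an edge leaving the tail can
have. -/
def IsTight (E : V → V → Prop) (β : V → V → ℝ) (v w : V) : Prop :=
  E v w ∧ β v w = inMax E β v

theorem eventually_forall_add_two_mul_le_inMax [Finite V] (E : V → V → Prop) (β : V → V → ℝ) :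
    ∀ᶠ ε in 𝓝[>] (0 : ℝ), ∀ v w, β v w < inMax E β v → β v w + 2 * ε ≤ inMax E β v := by
  simp only [eventually_all]
  intro v w hvw
  filter_upwards [Ioc_mem_nhdsGT (half_pos (sub_pos.2 hvw))] with ε hε
  linarith [hε.2]

/-- Away from tight edges there is room to lower the raising vector on `T`; along a tight edge
inside `T` the weight does not change. -/
theorem IsRaisingBalanced.eventually_alphaR_indicator [Finite V] (hout : ∀ v, ∃ w, E v w)
    (hin : ∀ v, ∃ u, E u v) (hβ : IsRaisingBalanced E β) {T : Set V}
    (hclosed : ∀ v ∈ T, ∀ w, IsTight E β v w → w ∈ T)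
    (hmax : ∀ v ∈ T, (∃ w, IsTight E β v w) → ∃ u ∈ T, E u v ∧ β u v = inMax E β v) :
    ∀ᶠ ε in 𝓝[>] (0 : ℝ), IsRaisingBalanced E (alphaR β (T.indicator fun _ => -ε)) := by
  classical
  filter_upwards [eventually_forall_add_two_mul_le_inMax E β, self_mem_nhdsWithin] with ε hslack hε
  rw [Set.mem_Ioi] at hε
  rw [isRaisingBalanced_iff_forall_edge_le hout] at hβ ⊢
  intro v w hvw
  suffices ∃ u, E u v ∧ alphaR β (T.indicator fun _ => -ε) v w ≤
      alphaR β (T.indicator fun _ => -ε) u v by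
    obtain ⟨u, huv, hu⟩ := this
    exact hu.trans (le_inMax _ huv)
  have hle := hβ v w hvw
  obtain ⟨u, huv, hu⟩ := exists_inMax_eq β (hin v)
  by_cases hv : v ∈ T
  · rcases hle.lt_or_eq with hlt | htight
    · have := hslack v w hlt
      refine ⟨u, huv, ?_⟩
      simp only [alphaR, Set.indicator_apply, if_pos hv]
      split_ifs <;> linarith
    · have hw := hclosed v hv w ⟨hvw, htight⟩
      obtain ⟨u, huT, huv, hu⟩ := hmax v hv ⟨w, hvw, htight⟩
      refine ⟨u, huv, ?_⟩
      simp only [alphaR, Set.indicator_apply, if_pos hv, if_pos hw, if_pos huT]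
      linarith
  · refine ⟨u, huv, ?_⟩
    simp only [alphaR, Set.indicator_apply, if_neg hv]
    split_ifs <;> linarith

theorem not_eventually_isRaisingBalanced_alphaR_indicator [Finite V]
    (hr : IsLeast (raisingBalancers E α) r) {T : Set V} (hne : T.Nonempty)
    (hpos : ∀ v ∈ T, 0 < r v) :
    ¬ ∀ᶠ ε in 𝓝[>] (0 : ℝ),
      IsRaisingBalanced E (alphaR (alphaR α r) (T.indicator fun _ => -ε)) := by
  intro hbal
  have hle : ∀ᶠ ε in 𝓝[>] (0 : ℝ), ∀ v, v ∈ T → ε ≤ r v := by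
    simp only [eventually_all]
    intro v hv
    filter_upwards [Ioc_mem_nhdsGT (hpos v hv)] with ε hε using hε.2
  obtain ⟨ε, ⟨hbal, hle⟩, hε⟩ := ((hbal.and hle).and self_mem_nhdsWithin).exists
  have hlower : r + T.indicator (fun _ => -ε) ∈ raisingBalancers E α := by
    refine ⟨fun v => ?_, alphaR_alphaR α r _ ▸ hbal⟩
    by_cases hv : v ∈ T
    · simpa [hv] using hle v hv
    · simpa [hv] using hr.1.1 v
  obtain ⟨v, hv⟩ := hne
  have hcontra := hr.2 hlower v
  simp only [Pi.add_apply, Set.indicator_of_mem hv] at hcontra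
  linarith

theorem exists_nonempty_subset_image_eq_or_forall_not [Finite V] {R : V → V → Prop} {C : Set V}
    (hne : C.Nonempty) (hC : ∀ v ∈ C, ∀ w, R v w → w ∈ C) :
    ∃ T ⊆ C, T.Nonempty ∧ ({w | ∃ v ∈ T, R v w} = T ∨ ∀ v ∈ T, ∀ w, ¬ R v w) := by
  obtain ⟨T, ⟨hTC, hTne, hTclosed⟩, hmin⟩ :=
    (Set.toFinite {T | T ⊆ C ∧ T.Nonempty ∧ ∀ v ∈ T, ∀ w, R v w → w ∈ T}).exists_minimal
      ⟨C, subset_rfl, hne, hC⟩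
  have himage : {w | ∃ v ∈ T, R v w} ⊆ T := fun w ⟨v, hv, hvw⟩ => hTclosed v hv w hvw
  refine ⟨T, hTC, hTne, or_iff_not_imp_right.2 fun hsucc => ?_⟩
  push Not at hsucc
  obtain ⟨v, hv, w, hvw⟩ := hsucc
  exact himage.antisymm (hmin ⟨himage.trans hTC, ⟨w, v, hv, hvw⟩,
    fun u hu w huw => ⟨u, himage hu, huw⟩⟩ himage)

theorem exists_isTight_leaving [Finite V] (hout : ∀ v, ∃ w, E v w) (hin : ∀ v, ∃ u, E u v)
    (hr : IsLeast (raisingBalancers E α) r) {C : Set V} {x : ℝ} (hne : C.Nonempty)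
    (hpos : ∀ v ∈ C, 0 < r v) (hlevel : ∀ v ∈ C, level E α r v = x) :
    ∃ v ∈ C, ∃ w ∉ C, IsTight E (alphaR α r) v w := by
  by_contra! hC
  obtain ⟨T, hTC, hTne, hT⟩ := exists_nonempty_subset_image_eq_or_forall_not
    (R := IsTight E (alphaR α r)) hne fun v hv w hvw => by_contra fun hw => hC v hv w hw hvw
  have hbal : ∀ᶠ ε in 𝓝[>] (0 : ℝ),
      IsRaisingBalanced E (alphaR (alphaR α r) (T.indicator fun _ => -ε)) := by
    refine hr.1.2.eventually_alphaR_indicator hout hin (fun v hv w hvw => ?_)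
      (fun v hv ⟨w, hvw⟩ => ?_)
    · rcases hT with himage | hnone
      · exact himage ▸ ⟨v, hv, hvw⟩
      · exact absurd hvw (hnone v hv w)
    · rcases hT with himage | hnone
      · obtain ⟨u, hu, huv, htight⟩ := himage.symm ▸ hv
        exact ⟨u, hu, huv, htight.trans ((hlevel u (hTC hu)).trans (hlevel v (hTC hv)).symm)⟩
      · exact absurd hvw (hnone v hv w)
  exact not_eventually_isRaisingBalanced_alphaR_indicator hr hTne (fun v hv => hpos v (hTC hv)) hbal

end TightEdges

section Gaps

variable [Fintype V] {E : V → V → Prop} {α : V → V → ℝ} {r : V → ℝ}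

theorem outMax_le_add_sum_rhoR (hin : ∀ v, ∃ u, E u v) {x : ℝ} (v : V)
    (hlevel : ∀ u, r v ≤ r u → level E α r u ≤ x) :
    outMax E α v ≤ x + ∑ u with r v ≤ r u, rhoR E α u := by
  classical
  have hwf : WellFounded fun u v => r v < r u :=
    haveI : IsStrictOrder V fun u v => r v < r u :=
      { irrefl := fun v => lt_irrefl (r v), trans := fun _ _ _ h₁ h₂ => h₂.trans h₁ }
    Finite.wellFounded_of_trans_of_irrefl _
  induction v using hwf.induction with | _ v ih =>
  obtain ⟨u, huv, hu⟩ := exists_inMax_eq α (hin v)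
  have hout_v := outMax_le_inMax_add_rhoR E α v
  have hedge : α u v + r v - r u ≤ x :=
    (le_inMax (alphaR α r) huv).trans (hlevel v le_rfl)
  rcases le_or_gt (r u) (r v) with huv_le | huv_lt
  · have hρ : rhoR E α v ≤ ∑ u with r v ≤ r u, rhoR E α u :=
      Finset.single_le_sum (fun u _ => rhoR_nonneg E α u) (by simp)
    linarith
  · have hout_u := (le_outMax α huv).trans (ih u huv_lt fun w hw => hlevel w (huv_lt.le.trans hw))
    have hv : v ∉ ({w | r u ≤ r w} : Finset V) := by simpa using huv_lt
    have hsubset : insert v ({w | r u ≤ r w} : Finset V) ⊆ ({w | r v ≤ r w} : Finset V) :=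
      Finset.insert_subset (by simp)
        (Finset.monotone_filter_right _ fun _ _ hw => huv_lt.le.trans hw)
    have hsum := Finset.sum_le_sum_of_subset_of_nonneg hsubset fun w _ _ => rhoR_nonneg E α w
    rw [Finset.sum_insert hv] at hsum
    linarith

theorem exists_lt_and_le_add_sum_rhoR (hout : ∀ v, ∃ w, E v w) (hin : ∀ v, ∃ u, E u v)
    (hr : IsLeast (raisingBalancers E α) r) {c : ℝ} (hc : 0 ≤ c) (hlt : ∃ v, c < r v) :
    ∃ v, c < r v ∧ r v ≤ c + ∑ u, rhoR E α u := by
  by_contra! hgap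
  obtain ⟨v₀, hv₀, hhighest⟩ := Set.exists_max_image {v | c < r v} (level E α r)
    (Set.toFinite _) hlt
  obtain ⟨v, ⟨hv, hvx⟩, w, hw, hvw, htight⟩ :=
    exists_isTight_leaving hout hin hr (C := {v | c < r v ∧ level E α r v = level E α r v₀})
      ⟨v₀, hv₀, rfl⟩ (fun v hv => hc.trans_lt hv.1) (fun v hv => hv.2)
  have htight : alphaR α r v w = level E α r v₀ := htight.trans hvx
  have hweight : α v w ≤ level E α r v₀ + ∑ u, rhoR E α u :=
    calc α v w ≤ outMax E α v := le_outMax α hvw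
      _ ≤ level E α r v₀ + ∑ u with r v ≤ r u, rhoR E α u :=
        outMax_le_add_sum_rhoR hin v fun u hu => hhighest u (hv.trans_le hu)
      _ ≤ level E α r v₀ + ∑ u, rhoR E α u := by
        gcongr
        · exact fun u _ _ => rhoR_nonneg E α u
        · exact Finset.filter_subset _ _
  have hcw : c < r w := by
    have hgap_v := hgap v hv
    have hdrop : α v w + r w - r v = level E α r v₀ := htight
    linarith
  exact hw ⟨hcw, (hhighest w hcw).antisymm (htight ▸ le_inMax (alphaR α r) hvw)⟩

theorem le_card_mul_of_forall_exists_le_add {f : V → ℝ} {δ : ℝ} (hδ : 0 ≤ δ)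
    (hgap : ∀ c, 0 ≤ c → (∃ v, c < f v) → ∃ v, c < f v ∧ f v ≤ c + δ) (v : V) :
    f v ≤ Fintype.card V * δ := by
  classical
  have le_card_filter (k : ℕ) (hk : ∃ v, k * δ < f v) :
      k ≤ Finset.card {u | f u ≤ k * δ} := by
    induction k with
    | zero => exact Nat.zero_le _
    | succ k ih =>
      have hmono : k * δ ≤ (k + 1 : ℕ) * δ := by gcongr; exact k.le_succ
      have hk' : ∃ v, k * δ < f v := hk.imp fun v hv => hmono.trans_lt hv
      obtain ⟨u, hlt, hle⟩ := hgap (k * δ) (by positivity) hk'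
      refine (Nat.succ_le_succ (ih hk')).trans (Finset.card_lt_card ?_)
      refine (Finset.ssubset_iff_of_subset
        (Finset.monotone_filter_right _ fun w _ hw => le_trans hw hmono)).2 ⟨u, ?_, ?_⟩
      · simp only [Finset.mem_filter, Finset.mem_univ, true_and]
        push_cast
        linarith
      · simpa using hlt
  by_contra! hv
  refine (le_card_filter _ ⟨v, hv⟩).not_gt (Finset.card_lt_univ_of_notMem (x := v) ?_)
  simpa using hv

theorem sum_le_card_sq_mul_sum_rhoR (hout : ∀ v, ∃ w, E v w) (hin : ∀ v, ∃ u, E u v)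
    (hr : IsLeast (raisingBalancers E α) r) :
    ∑ v, r v ≤ (Fintype.card V : ℝ) ^ 2 * ∑ v, rhoR E α v := by
  have hbound (v : V) : r v ≤ Fintype.card V * ∑ v, rhoR E α v :=
    le_card_mul_of_forall_exists_le_add (Finset.sum_nonneg fun v _ => rhoR_nonneg E α v)
      (fun _ hc hlt => exists_lt_and_le_add_sum_rhoR hout hin hr hc hlt) v
  calc ∑ v, r v ≤ Fintype.card V • (Fintype.card V * ∑ v, rhoR E α v) :=
        Finset.sum_le_card_nsmul _ _ _ fun v _ => hbound v
    _ = (Fintype.card V : ℝ) ^ 2 * ∑ v, rhoR E α v := by rw [nsmul_eq_mul]; ring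

end Gaps

section ExpectedDecay

variable [Fintype V] [DecidableEq V] {E : V → V → Prop} {α : V → V → ℝ} {r : V → ℝ}

/-- The expectation of `∑ v, (r v - r_v(t))` after `t` raising operations at independent uniformly
random vertices, as an average over all vertex sequences of length `t`. -/
noncomputable def expectedRemaining (E : V → V → Prop) (α : V → V → ℝ) (r : V → ℝ) (t : ℕ) : ℝ :=
  (∑ τ : Fin t → V, ∑ v, (r v - rvecList E α (List.ofFn τ) v)) / (Fintype.card V : ℝ) ^ t

theorem expectedRemaining_zero (E : V → V → Prop) (α : V → V → ℝ) (r : V → ℝ) :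
    expectedRemaining E α r 0 = ∑ v, r v := by
  simp [expectedRemaining, rvecList]

theorem expectedRemaining_succ (E : V → V → Prop) (α : V → V → ℝ) (r : V → ℝ) (t : ℕ) :
    expectedRemaining E α r (t + 1) =
      (∑ v, expectedRemaining E (raiseOp E α v) (r - Pi.single v (rhoR E α v / 2)) t) /
        Fintype.card V := by
  simp only [expectedRemaining]
  rw [← Finset.sum_div, div_div, ← pow_succ, ← (Fin.consEquiv fun _ : Fin (t + 1) => V).sum_comp,
    Fintype.sum_prod_type]
  simp only [Fin.consEquiv_apply, List.ofFn_succ, Fin.cons_zero, Fin.cons_succ, rvecList,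
    Pi.sub_apply, Pi.single_apply, sub_sub]

theorem sum_sum_sub_single_half_rhoR_div_card_le [Nonempty V] (hout : ∀ v, ∃ w, E v w)
    (hin : ∀ v, ∃ u, E u v) (hr : IsLeast (raisingBalancers E α) r) :
    (∑ v, ∑ u, (r - Pi.single v (rhoR E α v / 2) : V → ℝ) u) / Fintype.card V ≤
      (1 - 1 / (2 * (Fintype.card V : ℝ) ^ 3)) * ∑ v, r v := by
  have hsum : ∑ v, ∑ u, (r - Pi.single v (rhoR E α v / 2) : V → ℝ) u =
      Fintype.card V * ∑ v, r v - (∑ v, rhoR E α v) / 2 := by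
    simp only [Pi.sub_apply, Finset.sum_sub_distrib, Finset.sum_const, Finset.card_univ,
      nsmul_eq_mul, Finset.sum_pi_single', Finset.mem_univ, if_true, Finset.sum_div]
  have hbound := sum_le_card_sq_mul_sum_rhoR hout hin hr
  calc (∑ v, ∑ u, (r - Pi.single v (rhoR E α v / 2) : V → ℝ) u) / Fintype.card V
      = ∑ v, r v - (∑ v, rhoR E α v) / (2 * Fintype.card V) := by rw [hsum]; field_simp
    _ ≤ ∑ v, r v - (∑ v, r v) / (2 * (Fintype.card V : ℝ) ^ 3) := by
        rw [sub_le_sub_iff_left]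
        calc (∑ v, r v) / (2 * (Fintype.card V : ℝ) ^ 3)
            ≤ (Fintype.card V : ℝ) ^ 2 * (∑ v, rhoR E α v) / (2 * (Fintype.card V : ℝ) ^ 3) := by
              gcongr
          _ = (∑ v, rhoR E α v) / (2 * Fintype.card V) := by field_simp
    _ = (1 - 1 / (2 * (Fintype.card V : ℝ) ^ 3)) * ∑ v, r v := by ring

theorem expectedRemaining_le [Nonempty V] (hout : ∀ v, ∃ w, E v w) (hin : ∀ v, ∃ u, E u v)
    (hr : IsLeast (raisingBalancers E α) r) (t : ℕ) :
    expectedRemaining E α r t ≤ (1 - 1 / (2 * (Fintype.card V : ℝ) ^ 3)) ^ t * ∑ v, r v := by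
  have hn : (1 : ℝ) ≤ Fintype.card V := by exact_mod_cast Fintype.card_pos
  set q : ℝ := 1 - 1 / (2 * (Fintype.card V : ℝ) ^ 3) with hq
  have hq_nonneg : 0 ≤ q := by
    rw [hq, sub_nonneg, div_le_one (by positivity)]
    linarith [one_le_pow₀ hn (n := 3)]
  induction t generalizing α r with
  | zero => rw [expectedRemaining_zero, pow_zero, one_mul]
  | succ t ih =>
    calc expectedRemaining E α r (t + 1)
        = (∑ v, expectedRemaining E (raiseOp E α v) (r - Pi.single v (rhoR E α v / 2)) t) /
            Fintype.card V := by rw [expectedRemaining_succ]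
      _ ≤ (∑ v, q ^ t * ∑ u, (r - Pi.single v (rhoR E α v / 2) : V → ℝ) u) / Fintype.card V := by
          gcongr with v
          exact ih (isLeast_raisingBalancers_raiseOp (hout v) (hin v) hr)
      _ = q ^ t * ((∑ v, ∑ u, (r - Pi.single v (rhoR E α v / 2) : V → ℝ) u) / Fintype.card V) := by
          rw [← Finset.mul_sum, mul_div_assoc]
      _ ≤ q ^ t * (q * ∑ v, r v) := by
          gcongr
          exact sum_sum_sub_single_half_rhoR_div_card_le hout hin hr
      _ = q ^ (t + 1) * ∑ v, r v := by ring

end ExpectedDecay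

theorem expected_remaining_raising_decay_general [Fintype V] [DecidableEq V] {E : V → V → Prop}
    (hout : ∀ v, ∃ w, E v w) (hin : ∀ v, ∃ u, E u v) {α : V → V → ℝ} {rstar : V → ℝ}
    {σ : ℕ → V} (hσ : Fair σ)
    (hrstar : ∀ v, Tendsto (fun t => rvec E α σ t v) atTop (𝓝 (rstar v))) (t : ℕ) :
    (∑ τ : Fin t → V, ∑ v, (rstar v - rvecList E α (List.ofFn τ) v)) /
        (Fintype.card V : ℝ) ^ t ≤
      (1 - 1 / (2 * (Fintype.card V : ℝ) ^ 3)) ^ t * ∑ v, rstar v :=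
  have : Nonempty V := ⟨σ 0⟩
  expectedRemaining_le hout hin
    (isLeast_raisingBalancers_of_tendsto_rvec hout hin hσ (tendsto_pi_nhds.2 hrstar)) t

/-- For the random process choosing a uniformly random vertex at each
step and raising there, the expected remaining total raising
`Ψ(t) = ∑_v (r*_v − r_v(t))` satisfies `E[Ψ(t)] ≤ (1 − 1/(2n³))^t · Ψ(0)`.
The expectation is written as the average over all `n^t` equally likely length-`t`
sequences of vertices, and `Ψ(0) = ∑_v r*_v`. -/
theorem expected_remaining_raising_decay
    [Fintype V] [Nonempty V] [DecidableEq V] (E : V → V → Prop)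
    (hout : ∀ v, ∃ w, E v w) (hin : ∀ v, ∃ u, E u v)
    (hconn : ∀ u v : V, Relation.ReflTransGen E u v)
    (α : V → V → ℝ) (rstar : V → ℝ)
    (hrstar : ∀ σ : ℕ → V, Fair σ → ∀ v,
      Tendsto (fun t => rvec E α σ t v) atTop (nhds (rstar v)))
    (t : ℕ) :
    (∑ τ : Fin t → V, ∑ v, (rstar v - rvecList E α (List.ofFn τ) v)) /
        (Fintype.card V : ℝ) ^ t ≤
      (1 - 1 / (2 * (Fintype.card V : ℝ) ^ 3)) ^ t * ∑ v, rstar v := by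
  obtain ⟨σ, hσ⟩ := exists_fair V
  exact expected_remaining_raising_decay_general hout hin hσ (hrstar σ hσ) t
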